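/- arXiv:2502.12240 — 4 statements merged into one kernel-verified Lean document; each statement's English description precedes it below -/
import Mathlib

section
/- Tracing out either tensor factor of the spacetime density matrix recovers the conventional reduced density matrices: the partial trace of T_AB over H_B equals ρ_A := Tr_{A'} ρ, and the partial trace of T_AB over H_A equals ρ_B := Tr_{B'} (U ρ U†). -/
open Matrix
open scoped Kronecker ComplexOrder

/-- Partial trace over the second (right) tensor factor. -/
noncomputable def ptraceR {A B : Type*} [Fintype B] (M : Matrix (A × B) (A × B) ℂ) : Matrix A A ℂ :=
  Matrix.of fun a a' => ∑ b, M (a, b) (a', b)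

/-- Partial trace over the first (left) tensor factor. -/
noncomputable def ptraceL {A B : Type*} [Fintype A] (M : Matrix (A × B) (A × B) ℂ) : Matrix B B ℂ :=
  Matrix.of fun b b' => ∑ a, M (a, b) (a, b')

/-!
The partial traces are adjoint to `X ↦ X ⊗ 1` and `X ↦ 1 ⊗ X` for the trace pairing. As that pairing
is nondegenerate, a reduced matrix is determined by the expectation values of local observables.
Putting `O_B = 1` in the defining identity of `T_AB` cancels `U† U`; putting `O_A = 1` leaves
`Tr (U ρ U† (O_B ⊗ 1))` by cyclicity of the trace.
-/

section PartialTrace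

variable {A B C : Type*} [Fintype A] [Fintype B] [Fintype C]

theorem trace_mul_kronecker_one [DecidableEq B]
    (M : Matrix (A × B) (A × B) ℂ) (X : Matrix A A ℂ) :
    (M * (X ⊗ₖ (1 : Matrix B B ℂ))).trace = (ptraceR M * X).trace := by
  calc (M * (X ⊗ₖ (1 : Matrix B B ℂ))).trace
      = ∑ a, ∑ b, ∑ a', M (a, b) (a', b) * X a' a := by
        simp [trace, mul_apply, Fintype.sum_prod_type, one_apply]
    _ = ∑ a, ∑ a', ∑ b, M (a, b) (a', b) * X a' a :=
        Finset.sum_congr rfl fun _ _ => Finset.sum_comm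
    _ = (ptraceR M * X).trace := by
        simp [trace, mul_apply, ptraceR, Finset.sum_mul]

theorem trace_mul_one_kronecker [DecidableEq A]
    (M : Matrix (A × B) (A × B) ℂ) (X : Matrix B B ℂ) :
    (M * ((1 : Matrix A A ℂ) ⊗ₖ X)).trace = (ptraceL M * X).trace := by
  calc (M * ((1 : Matrix A A ℂ) ⊗ₖ X)).trace
      = ∑ b, ∑ a, ∑ b', M (a, b) (a, b') * X b' b := by
        simp [trace, mul_apply, Fintype.sum_prod_type_right, one_apply]
    _ = ∑ b, ∑ b', ∑ a, M (a, b) (a, b') * X b' b :=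
        Finset.sum_congr rfl fun _ _ => Finset.sum_comm
    _ = (ptraceL M * X).trace := by
        simp [trace, mul_apply, ptraceL, Finset.sum_mul]

theorem ptraceR_eq_ptraceR_iff [DecidableEq B] [DecidableEq C]
    {M : Matrix (A × B) (A × B) ℂ} {N : Matrix (A × C) (A × C) ℂ} :
    ptraceR M = ptraceR N ↔ ∀ X : Matrix A A ℂ,
      (M * (X ⊗ₖ (1 : Matrix B B ℂ))).trace = (N * (X ⊗ₖ (1 : Matrix C C ℂ))).trace := by
  simp only [trace_mul_kronecker_one, ext_iff_trace_mul_right]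

theorem ptraceL_eq_ptraceR_iff [DecidableEq A] [DecidableEq C]
    {M : Matrix (A × B) (A × B) ℂ} {N : Matrix (B × C) (B × C) ℂ} :
    ptraceL M = ptraceR N ↔ ∀ X : Matrix B B ℂ,
      (M * ((1 : Matrix A A ℂ) ⊗ₖ X)).trace = (N * (X ⊗ₖ (1 : Matrix C C ℂ))).trace := by
  simp only [trace_mul_one_kronecker, trace_mul_kronecker_one, ext_iff_trace_mul_right]

end PartialTrace

theorem ptrace_spacetime_density_matrix_general
    {A A' B B' : Type*} [Fintype A] [Fintype A'] [Fintype B] [Fintype B']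
    [DecidableEq A] [DecidableEq A'] [DecidableEq B']
    (ρ : Matrix (A × A') (A × A') ℂ)
    (U : Matrix (B × B') (A × A') ℂ) (V : Matrix (A × A') (B × B') ℂ) (hVU : V * U = 1)
    (T : Matrix (A × B) (A × B) ℂ)
    (hT : ∀ (OA : Matrix A A ℂ) (OB : Matrix B B ℂ),
      (T * (OA ⊗ₖ OB)).trace
        = (ρ * (OA ⊗ₖ (1 : Matrix A' A' ℂ)) * V
            * (OB ⊗ₖ (1 : Matrix B' B' ℂ)) * U).trace) :
    ptraceR T = ptraceR ρ ∧ ptraceL T = ptraceR (U * ρ * V) := by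
  classical
  constructor
  · refine ptraceR_eq_ptraceR_iff.mpr fun OA => ?_
    calc (T * (OA ⊗ₖ (1 : Matrix B B ℂ))).trace
        = (ρ * (OA ⊗ₖ (1 : Matrix A' A' ℂ)) * (V * U)).trace := by
          rw [hT, one_kronecker_one, Matrix.mul_one, Matrix.mul_assoc _ V U]
      _ = (ρ * (OA ⊗ₖ (1 : Matrix A' A' ℂ))).trace := by
          rw [hVU, Matrix.mul_one]
  · refine ptraceL_eq_ptraceR_iff.mpr fun OB => ?_
    calc (T * ((1 : Matrix A A ℂ) ⊗ₖ OB)).trace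
        = (ρ * V * (OB ⊗ₖ (1 : Matrix B' B' ℂ)) * U).trace := by
          rw [hT, one_kronecker_one, Matrix.mul_one]
      _ = (U * ρ * V * (OB ⊗ₖ (1 : Matrix B' B' ℂ))).trace := by
          rw [trace_mul_comm]
          simp only [Matrix.mul_assoc]

/-- Tracing out either factor of the spacetime density matrix `T_AB` recovers the
conventional reduced density matrices: `Tr_B T_AB = ρ_A := Tr_{A'} ρ` and
`Tr_A T_AB = ρ_B := Tr_{B'} (U ρ U†)`. -/
theorem ptrace_spacetime_density_matrix
    {A A' B B' : Type*} [Fintype A] [Fintype A'] [Fintype B] [Fintype B']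
    [DecidableEq A] [DecidableEq A'] [DecidableEq B] [DecidableEq B']
    (ρ : Matrix (A × A') (A × A') ℂ) (hρ : ρ.PosSemidef) (hρtr : ρ.trace = 1)
    (U : Matrix (B × B') (A × A') ℂ) (hU : Uᴴ * U = 1) (hU' : U * Uᴴ = 1)
    (T : Matrix (A × B) (A × B) ℂ)
    (hT : ∀ (OA : Matrix A A ℂ) (OB : Matrix B B ℂ),
      (T * (OA ⊗ₖ OB)).trace
        = (ρ * (OA ⊗ₖ (1 : Matrix A' A' ℂ)) * Uᴴ
            * (OB ⊗ₖ (1 : Matrix B' B' ℂ)) * U).trace) :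
    ptraceR T = ptraceR ρ ∧ ptraceL T = ptraceR (U * ρ * Uᴴ) :=
  ptrace_spacetime_density_matrix_general ρ U Uᴴ hU T hT
end

section
/- The Hermitian adjoint of the spacetime density matrix encodes the opposite operator ordering: for all linear operators O_A on H_A and O_B on H_B, Tr(T_AB† (O_A ⊗ O_B)) = Tr(ρ U† (O_B ⊗ 1) U (O_A ⊗ 1)), i.e. it produces the Wightman correlator ⟨O_B(t) O_A(0)⟩. -/
open Matrix
open scoped Kronecker ComplexOrder ENNReal

section StarTrace

variable {R m n p : Type*} [NonUnitalCommSemiring R] [StarRing R] [Fintype m] [Fintype n]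

theorem trace_conjTranspose_mul_eq_star_trace (M N : Matrix m n R) :
    (Mᴴ * N).trace = star (M * Nᴴ).trace := by
  rw [← trace_conjTranspose, conjTranspose_mul, conjTranspose_conjTranspose, trace_mul_comm]

theorem star_trace_mul_mul [Fintype p] (M : Matrix m n R) (X : Matrix n p R)
    (Y : Matrix p m R) :
    star (M * X * Y).trace = (Mᴴ * Yᴴ * Xᴴ).trace := by
  rw [← trace_conjTranspose, conjTranspose_mul, conjTranspose_mul, trace_mul_cycle',
    ← Matrix.mul_assoc]

end StarTrace

theorem conjTranspose_conjTranspose_mul_mul {R m n : Type*} [NonUnitalSemiring R] [StarRing R]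
    [Fintype m] (U : Matrix m n R) (M : Matrix m m R) :
    (Uᴴ * M * U)ᴴ = Uᴴ * Mᴴ * U := by
  rw [conjTranspose_mul, conjTranspose_mul, conjTranspose_conjTranspose, Matrix.mul_assoc]

theorem conjTranspose_kronecker_one {R m n p : Type*} [CommSemiring R] [StarRing R]
    [DecidableEq p] (M : Matrix m n R) :
    (M ⊗ₖ (1 : Matrix p p R))ᴴ = Mᴴ ⊗ₖ (1 : Matrix p p R) := by
  rw [conjTranspose_kronecker, conjTranspose_one]

theorem conjTranspose_spacetime_density_matrix_gives_opposite_ordering_general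
    {R A A' B B' : Type*} [CommSemiring R] [StarRing R]
    [Fintype A] [Fintype A'] [Fintype B] [Fintype B'] [DecidableEq A'] [DecidableEq B']
    (ρ : Matrix (A × A') (A × A') R) (U : Matrix (B × B') (A × A') R)
    (T : Matrix (A × B) (A × B) R)
    (hT : ∀ (OA : Matrix A A R) (OB : Matrix B B R),
      (T * (OA ⊗ₖ OB)).trace
        = (ρ * (OA ⊗ₖ (1 : Matrix A' A' R)) * Uᴴ
            * (OB ⊗ₖ (1 : Matrix B' B' R)) * U).trace)
    (OA : Matrix A A R) (OB : Matrix B B R) :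
    (Tᴴ * (OA ⊗ₖ OB)).trace
      = (ρᴴ * Uᴴ * (OB ⊗ₖ (1 : Matrix B' B' R)) * U
          * (OA ⊗ₖ (1 : Matrix A' A' R))).trace := by
  calc (Tᴴ * (OA ⊗ₖ OB)).trace
    _ = star (T * (OAᴴ ⊗ₖ OBᴴ)).trace := by
      rw [trace_conjTranspose_mul_eq_star_trace, conjTranspose_kronecker]
    _ = star (ρ * (OAᴴ ⊗ₖ (1 : Matrix A' A' R))
          * (Uᴴ * (OBᴴ ⊗ₖ (1 : Matrix B' B' R)) * U)).trace := by
      rw [hT]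
      simp only [Matrix.mul_assoc]
    _ = (ρᴴ * (Uᴴ * (OB ⊗ₖ (1 : Matrix B' B' R)) * U)
          * (OA ⊗ₖ (1 : Matrix A' A' R))).trace := by
      rw [star_trace_mul_mul, conjTranspose_conjTranspose_mul_mul, conjTranspose_kronecker_one,
        conjTranspose_kronecker_one, conjTranspose_conjTranspose, conjTranspose_conjTranspose]
    _ = (ρᴴ * Uᴴ * (OB ⊗ₖ (1 : Matrix B' B' R)) * U
          * (OA ⊗ₖ (1 : Matrix A' A' R))).trace := by
      simp only [Matrix.mul_assoc]

/-- The Hermitian adjoint of the spacetime density matrix encodes the opposite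
operator ordering: `Tr (T_AB† (O_A ⊗ O_B)) = Tr (ρ U† (O_B ⊗ 1) U (O_A ⊗ 1))`,
i.e. it produces the Wightman correlator `⟨O_B(t) O_A(0)⟩`. -/
theorem conjTranspose_spacetime_density_matrix_gives_opposite_ordering
    {A A' B B' : Type*} [Fintype A] [Fintype A'] [Fintype B] [Fintype B']
    [DecidableEq A] [DecidableEq A'] [DecidableEq B] [DecidableEq B']
    (ρ : Matrix (A × A') (A × A') ℂ) (hρ : ρ.PosSemidef) (hρtr : ρ.trace = 1)
    (U : Matrix (B × B') (A × A') ℂ) (hU : Uᴴ * U = 1) (hU' : U * Uᴴ = 1)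
    (T : Matrix (A × B) (A × B) ℂ)
    (hT : ∀ (OA : Matrix A A ℂ) (OB : Matrix B B ℂ),
      (T * (OA ⊗ₖ OB)).trace
        = (ρ * (OA ⊗ₖ (1 : Matrix A' A' ℂ)) * Uᴴ
            * (OB ⊗ₖ (1 : Matrix B' B' ℂ)) * U).trace) :
    ∀ (OA : Matrix A A ℂ) (OB : Matrix B B ℂ),
      (Tᴴ * (OA ⊗ₖ OB)).trace
        = (ρ * Uᴴ * (OB ⊗ₖ (1 : Matrix B' B' ℂ)) * U
            * (OA ⊗ₖ (1 : Matrix A' A' ℂ))).trace := by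
  simpa only [hρ.isHermitian.eq] using
    conjTranspose_spacetime_density_matrix_gives_opposite_ordering_general ρ U T hT
end

section
/- Suppose ρ = |ψ⟩⟨ψ| is a pure state. Then for every integer n ≥ 1, Tr(T_AB^n) = Tr((Θ_{A'}(T_{ĀB}))^n), where Θ_{A'} denotes the partial transpose on the H_A' factor. Consequently T_AB and Θ_{A'}(T_{ĀB}) have the same spectrum with multiplicities. -/
open Matrix
open scoped Kronecker ComplexOrder ENNReal

open scoped Classical

/-- The partial transpose on the first tensor factor. -/
noncomputable def ptranspL {A B : Type*} (M : Matrix (A × B) (A × B) ℂ) :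
    Matrix (A × B) (A × B) ℂ :=
  Matrix.of fun x y => M (y.1, x.2) (x.1, y.2)

/-!
For a rank-one operator `|ψ⟩⟨χ|` the two operators are products of the same two rectangular
matrices in opposite orders. Writing `Φ(O)` for the Heisenberg-picture operator of `O` on `H_B` and
testing against matrix units gives
`T_AB (a, b) (a₂, b₂) = ∑ a', (Φ(|b₂⟩⟨b|) ψ) (a, a') * χ (a₂, a')` and
`T_ĀB (a', b) (a₂', b₂) = ∑ a, χ (a, a₂') * (Φ(|b₂⟩⟨b|) ψ) (a, a')`.
The first is a matrix product `M * N`; exchanging `a'` and `a₂'` turns the second into `N * M`, and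
this exchange is the partial transpose. Finally, `M * N` and `N * M` have the same moments and the
same nonzero eigenvalues.
-/

section ProductsInOppositeOrder

variable {m n R : Type*} [Fintype m] [Fintype n] [DecidableEq m] [DecidableEq n]

theorem matrix_mul_pow_succ [Semiring R] (M : Matrix m n R) (N : Matrix n m R) (k : ℕ) :
    (M * N) ^ (k + 1) = M * (N * M) ^ k * N := by
  induction k with
  | zero => simp
  | succ k ih => rw [pow_succ, ih, pow_succ]; simp only [Matrix.mul_assoc]

theorem trace_mul_pow_comm [CommSemiring R] (M : Matrix m n R) (N : Matrix n m R) {k : ℕ}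
    (hk : k ≠ 0) : ((M * N) ^ k).trace = ((N * M) ^ k).trace := by
  obtain ⟨j, rfl⟩ := Nat.exists_eq_succ_of_ne_zero hk
  rw [Nat.succ_eq_add_one, matrix_mul_pow_succ, trace_mul_cycle, ← pow_succ']

variable [CommRing R] [IsDomain R] [DecidableEq R]

theorem filter_ne_zero_roots_X_pow_mul (k : ℕ) {p : Polynomial R} (hp : p ≠ 0) :
    (Polynomial.X ^ k * p).roots.filter (· ≠ 0) = p.roots.filter (· ≠ 0) := by
  have hX : (Polynomial.X ^ k : Polynomial R) ≠ 0 := pow_ne_zero k Polynomial.X_ne_zero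
  rw [Polynomial.roots_mul (mul_ne_zero hX hp), Polynomial.roots_X_pow, Multiset.filter_add,
    Multiset.filter_nsmul]
  simp

theorem filter_ne_zero_roots_charpoly_mul_comm (M : Matrix m n R) (N : Matrix n m R) :
    (M * N).charpoly.roots.filter (· ≠ 0) = (N * M).charpoly.roots.filter (· ≠ 0) := by
  rw [← filter_ne_zero_roots_X_pow_mul (Fintype.card n) (charpoly_monic (M * N)).ne_zero,
    charpoly_mul_comm', filter_ne_zero_roots_X_pow_mul _ (charpoly_monic (N * M)).ne_zero]

end ProductsInOppositeOrder

section MatrixUnits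

variable {A A' B m R : Type*} [Fintype A] [DecidableEq A]

theorem trace_mul_single_kronecker_single [Fintype B] [DecidableEq B] [Semiring R]
    (T : Matrix (A × B) (A × B) R) (a a₂ : A) (b b₂ : B) :
    (T * (single a₂ a (1 : R) ⊗ₖ single b₂ b (1 : R))).trace = T (a, b) (a₂, b₂) := by
  rw [single_kronecker_single, trace_mul_single]
  simp

theorem trace_vecMulVec_mul [Fintype m] [CommSemiring R] (ψ χ : m → R) (M : Matrix m m R) :
    (vecMulVec ψ χ * M).trace = χ ⬝ᵥ M *ᵥ ψ := by
  rw [trace_mul_comm, mul_vecMulVec, trace_vecMulVec, dotProduct_comm]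

variable [Fintype A'] [DecidableEq A'] [CommSemiring R]

theorem trace_vecMulVec_mul_single_kronecker_one_mul (ψ χ : A × A' → R)
    (M : Matrix (A × A') (A × A') R) (a a₂ : A) :
    (vecMulVec ψ χ * (single a₂ a (1 : R) ⊗ₖ (1 : Matrix A' A' R)) * M).trace
      = ∑ a', χ (a₂, a') * (M *ᵥ ψ) (a, a') := by
  rw [Matrix.mul_assoc, trace_vecMulVec_mul, ← mulVec_mulVec]
  simp [dotProduct, mulVec, single_apply, one_apply, Fintype.sum_prod_type, ite_and]

theorem trace_vecMulVec_mul_one_kronecker_single_mul (ψ χ : A × A' → R)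
    (M : Matrix (A × A') (A × A') R) (a' a₂' : A') :
    (vecMulVec ψ χ * ((1 : Matrix A A R) ⊗ₖ single a₂' a' (1 : R)) * M).trace
      = ∑ a, χ (a, a₂') * (M *ᵥ ψ) (a, a') := by
  rw [Matrix.mul_assoc, trace_vecMulVec_mul, ← mulVec_mulVec]
  simp [dotProduct, mulVec, single_apply, one_apply, Fintype.sum_prod_type, ite_and]

end MatrixUnits

section Factorization

variable {A A' B R : Type*} [DecidableEq B] [CommSemiring R]

/-- The factor of the spacetime density matrices of `|ψ⟩⟨χ|` that carries the dynamics: its entries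
are the components of `Φ(|b₂⟩⟨b|) ψ`. Here `Φ` sends an operator on `H_B` at the later time to its
Heisenberg-picture operator on `H_A ⊗ H_A'`. -/
def heisenbergFactor [Fintype A] [Fintype A'] (ψ : A × A' → R)
    (Φ : Matrix B B R → Matrix (A × A') (A × A') R) : Matrix (A × B) (A' × B) R :=
  of fun x y => (Φ (single y.2 x.2 1) *ᵥ ψ) (x.1, y.1)

/-- The factor of the spacetime density matrices of `|ψ⟩⟨χ|` that carries the bra: `χ` reshaped
into an operator from `H_A` to `H_A'`, tensored with the identity of `H_B`. -/
def braFactor (B : Type*) [DecidableEq B] (χ : A × A' → R) : Matrix (A' × B) (A × B) R :=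
  (of fun a' a => χ (a, a')) ⊗ₖ (1 : Matrix B B R)

variable [Fintype A] [Fintype A'] [Fintype B]

theorem heisenbergFactor_mul_braFactor_apply (ψ χ : A × A' → R)
    (Φ : Matrix B B R → Matrix (A × A') (A × A') R) (a a₂ : A) (b b₂ : B) :
    (heisenbergFactor ψ Φ * braFactor B χ) (a, b) (a₂, b₂)
      = ∑ a', χ (a₂, a') * (Φ (single b₂ b 1) *ᵥ ψ) (a, a') := by
  simp [heisenbergFactor, braFactor, mul_apply, Fintype.sum_prod_type, one_apply, mul_comm]

theorem braFactor_mul_heisenbergFactor_apply (ψ χ : A × A' → R)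
    (Φ : Matrix B B R → Matrix (A × A') (A × A') R) (a' a₂' : A') (b b₂ : B) :
    (braFactor B χ * heisenbergFactor ψ Φ) (a', b) (a₂', b₂)
      = ∑ a, χ (a, a') * (Φ (single b₂ b 1) *ᵥ ψ) (a, a₂') := by
  simp [heisenbergFactor, braFactor, mul_apply, Fintype.sum_prod_type, one_apply]

theorem eq_heisenbergFactor_mul_braFactor [DecidableEq A'] {ψ χ : A × A' → R}
    {Φ : Matrix B B R → Matrix (A × A') (A × A') R} {T : Matrix (A × B) (A × B) R}
    (hT : ∀ (OA : Matrix A A R) (OB : Matrix B B R),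
      (T * (OA ⊗ₖ OB)).trace
        = (vecMulVec ψ χ * (OA ⊗ₖ (1 : Matrix A' A' R)) * Φ OB).trace) :
    T = heisenbergFactor ψ Φ * braFactor B χ := by
  ext ⟨a, b⟩ ⟨a₂, b₂⟩
  rw [← trace_mul_single_kronecker_single T, hT, trace_vecMulVec_mul_single_kronecker_one_mul,
    heisenbergFactor_mul_braFactor_apply]

theorem ptranspL_eq_braFactor_mul_heisenbergFactor [DecidableEq A] {ψ χ : A × A' → ℂ}
    {Φ : Matrix B B ℂ → Matrix (A × A') (A × A') ℂ} {T' : Matrix (A' × B) (A' × B) ℂ}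
    (hT' : ∀ (O : Matrix A' A' ℂ) (OB : Matrix B B ℂ),
      (T' * (O ⊗ₖ OB)).trace
        = (vecMulVec ψ χ * ((1 : Matrix A A ℂ) ⊗ₖ O) * Φ OB).trace) :
    ptranspL T' = braFactor B χ * heisenbergFactor ψ Φ := by
  ext ⟨a', b⟩ ⟨a₂', b₂⟩
  rw [ptranspL, of_apply, ← trace_mul_single_kronecker_single T', hT',
    trace_vecMulVec_mul_one_kronecker_single_mul, braFactor_mul_heisenbergFactor_apply]

end Factorization

theorem spacetime_density_matrix_pure_state_spectrum_general
    {A A' B : Type*} [Fintype A] [Fintype A'] [Fintype B]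
    [DecidableEq A] [DecidableEq A'] [DecidableEq B]
    (ψ χ : A × A' → ℂ) (Φ : Matrix B B ℂ → Matrix (A × A') (A × A') ℂ)
    (T : Matrix (A × B) (A × B) ℂ)
    (hT : ∀ (OA : Matrix A A ℂ) (OB : Matrix B B ℂ),
      (T * (OA ⊗ₖ OB)).trace
        = (vecMulVec ψ χ * (OA ⊗ₖ (1 : Matrix A' A' ℂ)) * Φ OB).trace)
    (T' : Matrix (A' × B) (A' × B) ℂ)
    (hT' : ∀ (O : Matrix A' A' ℂ) (OB : Matrix B B ℂ),
      (T' * (O ⊗ₖ OB)).trace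
        = (vecMulVec ψ χ * ((1 : Matrix A A ℂ) ⊗ₖ O) * Φ OB).trace) :
    (∀ n : ℕ, 1 ≤ n → (T ^ n).trace = ((ptranspL T') ^ n).trace) ∧
      T.charpoly.roots.filter (fun z => z ≠ 0)
        = (ptranspL T').charpoly.roots.filter (fun z => z ≠ 0) := by
  rw [eq_heisenbergFactor_mul_braFactor hT, ptranspL_eq_braFactor_mul_heisenbergFactor hT']
  exact ⟨fun n hn => trace_mul_pow_comm _ _ (Nat.one_le_iff_ne_zero.mp hn),
    filter_ne_zero_roots_charpoly_mul_comm _ _⟩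

/-- For a pure state `ρ = |ψ⟩⟨ψ|`, all moments of `T_AB` agree with those of the
partial transpose (on the `H_A'` factor) of `T_ĀB`; consequently the two operators
have the same spectrum (here: the same nonzero eigenvalues, i.e. nonzero roots of the
characteristic polynomial, with multiplicities). -/
theorem spacetime_density_matrix_pure_state_spectrum
    {A A' B B' : Type*} [Fintype A] [Fintype A'] [Fintype B] [Fintype B']
    [DecidableEq A] [DecidableEq A'] [DecidableEq B] [DecidableEq B']
    (ψ : A × A' → ℂ) (hψ : star ψ ⬝ᵥ ψ = 1)
    (ρ : Matrix (A × A') (A × A') ℂ) (hρ : ρ = Matrix.vecMulVec ψ (star ψ))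
    (U : Matrix (B × B') (A × A') ℂ) (hU : Uᴴ * U = 1) (hU' : U * Uᴴ = 1)
    (T : Matrix (A × B) (A × B) ℂ)
    (hT : ∀ (OA : Matrix A A ℂ) (OB : Matrix B B ℂ),
      (T * (OA ⊗ₖ OB)).trace
        = (ρ * (OA ⊗ₖ (1 : Matrix A' A' ℂ)) * Uᴴ
            * (OB ⊗ₖ (1 : Matrix B' B' ℂ)) * U).trace)
    (T' : Matrix (A' × B) (A' × B) ℂ)
    (hT' : ∀ (O : Matrix A' A' ℂ) (OB : Matrix B B ℂ),
      (T' * (O ⊗ₖ OB)).trace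
        = (ρ * ((1 : Matrix A A ℂ) ⊗ₖ O) * Uᴴ
            * (OB ⊗ₖ (1 : Matrix B' B' ℂ)) * U).trace) :
    (∀ n : ℕ, 1 ≤ n → (T ^ n).trace = ((ptranspL T') ^ n).trace) ∧
      (Matrix.charpoly T).roots.filter (fun z => z ≠ 0)
        = (Matrix.charpoly (ptranspL T')).roots.filter (fun z => z ≠ 0) := by
  subst hρ
  exact spacetime_density_matrix_pure_state_spectrum_general ψ (star ψ)
    (fun OB => Uᴴ * (OB ⊗ₖ (1 : Matrix B' B' ℂ)) * U)
    T (by simpa only [Matrix.mul_assoc] using hT) T' (by simpa only [Matrix.mul_assoc] using hT')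
end

section
/- (Corollary on causal connection) If Im Tr(T_AB²) ≠ 0 or Re Tr(T_AB²) < 0, then there exist linear operators O_A on H_A and O_B on H_B with ⟨[O_A(0), O_B(t)]⟩ ≠ 0; that is, a nonzero imaginary part or a negative real part of Tr(T_AB²) implies that some time-separated commutator has nonvanishing expectation value. -/
open Matrix
open scoped Kronecker ComplexOrder ENNReal

/-! If every time-separated commutator has vanishing expectation value, then `T` is Hermitian,
because `Tᴴ` encodes the correlators with the two observables in the opposite order and a matrix
on a tensor product is determined by its traces against product operators. In that case
`Tr(T²) = Tr(Tᴴ T)` is real and nonnegative. -/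

section KroneckerTrace

variable {l m p q 𝕜 : Type*} [Fintype l] [Fintype m] [Fintype p] [Fintype q]

theorem eq_iff_forall_trace_mul_kronecker_eq [NonAssocSemiring 𝕜]
    {S T : Matrix (l × m) (p × q) 𝕜} :
    S = T ↔ ∀ (X : Matrix p l 𝕜) (Y : Matrix q m 𝕜),
      (S * (X ⊗ₖ Y)).trace = (T * (X ⊗ₖ Y)).trace := by
  refine ⟨fun h X Y => h ▸ rfl, fun h => ?_⟩
  classical
  ext ⟨i, j⟩ ⟨i', j'⟩
  simpa [single_kronecker_single, trace_mul_single] using h (single i' i 1) (single j' j 1)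

theorem trace_conjTranspose_mul_kronecker [NonUnitalCommSemiring 𝕜] [StarRing 𝕜]
    (T : Matrix (l × m) (p × q) 𝕜) (X : Matrix l p 𝕜) (Y : Matrix m q 𝕜) :
    (Tᴴ * (X ⊗ₖ Y)).trace = star (T * (Xᴴ ⊗ₖ Yᴴ)).trace := by
  rw [← trace_conjTranspose, conjTranspose_mul, ← conjTranspose_kronecker,
    conjTranspose_conjTranspose, trace_mul_comm]

end KroneckerTrace

theorem trace_sq_nonneg_of_isHermitian {n 𝕜 : Type*} [Fintype n] [DecidableEq n] [Ring 𝕜]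
    [PartialOrder 𝕜] [StarRing 𝕜] [StarOrderedRing 𝕜] {T : Matrix n n 𝕜} (hT : T.IsHermitian) :
    0 ≤ (T ^ 2).trace := by
  have h := (posSemidef_conjTranspose_mul_self T).trace_nonneg
  rwa [hT.eq, ← sq] at h

theorem trace_mul_star_of_isHermitian {n 𝕜 : Type*} [Fintype n] [NonUnitalCommSemiring 𝕜]
    [StarRing 𝕜] {ρ : Matrix n n 𝕜} (hρ : ρ.IsHermitian) (X : Matrix n n 𝕜) :
    (ρ * star X).trace = star (ρ * X).trace := by
  rw [← trace_conjTranspose, conjTranspose_mul, hρ.eq, trace_mul_comm, star_eq_conjTranspose]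

section KroneckerOne

variable {l m n p 𝕜 : Type*} [DecidableEq n] [CommSemiring 𝕜] [StarRing 𝕜]

theorem conjTranspose_kronecker_one_s11 (X : Matrix l m 𝕜) :
    (X ⊗ₖ (1 : Matrix n n 𝕜))ᴴ = Xᴴ ⊗ₖ (1 : Matrix n n 𝕜) := by
  rw [conjTranspose_kronecker, conjTranspose_one]

theorem conjTranspose_conj_kronecker_one [Fintype m] [Fintype n] (U : Matrix (m × n) p 𝕜)
    (X : Matrix m m 𝕜) :
    (Uᴴ * (X ⊗ₖ (1 : Matrix n n 𝕜)) * U)ᴴ = Uᴴ * (Xᴴ ⊗ₖ (1 : Matrix n n 𝕜)) * U := by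
  rw [conjTranspose_mul, conjTranspose_mul, conjTranspose_kronecker_one_s11,
    conjTranspose_conjTranspose, Matrix.mul_assoc]

end KroneckerOne

/-- `T` is the spacetime density matrix of the two-time correlators `ω (a O_A * b O_B)`: here `ω` is
the expectation value on an algebra `R` of observables, and `a`, `b` send operators on `H_A`, `H_B`
to Heisenberg-picture observables at the earlier and the later time. -/
def IsSpacetimeDensityMatrix {A B R 𝕜 : Type*} [Fintype A] [Fintype B]
    [NonUnitalNonAssocSemiring 𝕜] [Mul R] (ω : R → 𝕜) (a : Matrix A A 𝕜 → R) (b : Matrix B B 𝕜 → R)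
    (T : Matrix (A × B) (A × B) 𝕜) : Prop :=
  ∀ (OA : Matrix A A 𝕜) (OB : Matrix B B 𝕜), (T * (OA ⊗ₖ OB)).trace = ω (a OA * b OB)

namespace IsSpacetimeDensityMatrix

variable {A B R 𝕜 : Type*} [Fintype A] [Fintype B] [CommSemiring 𝕜] [StarRing 𝕜] [Mul R]
  [StarMul R] {ω : R → 𝕜} {a : Matrix A A 𝕜 → R} {b : Matrix B B 𝕜 → R}
  {T : Matrix (A × B) (A × B) 𝕜}

theorem trace_conjTranspose_mul (hT : IsSpacetimeDensityMatrix ω a b T)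
    (hω : ∀ x, ω (star x) = star (ω x)) (ha : ∀ O, a Oᴴ = star (a O))
    (hb : ∀ O, b Oᴴ = star (b O)) (OA : Matrix A A 𝕜) (OB : Matrix B B 𝕜) :
    (Tᴴ * (OA ⊗ₖ OB)).trace = ω (b OB * a OA) := by
  rw [trace_conjTranspose_mul_kronecker, hT, ha, hb, ← star_mul, hω, star_star]

theorem isHermitian_iff (hT : IsSpacetimeDensityMatrix ω a b T)
    (hω : ∀ x, ω (star x) = star (ω x)) (ha : ∀ O, a Oᴴ = star (a O))
    (hb : ∀ O, b Oᴴ = star (b O)) :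
    T.IsHermitian ↔ ∀ OA OB, ω (a OA * b OB) = ω (b OB * a OA) := by
  rw [IsHermitian, eq_comm, eq_iff_forall_trace_mul_kronecker_eq]
  simp only [hT _ _, hT.trace_conjTranspose_mul hω ha hb]

end IsSpacetimeDensityMatrix

theorem causal_connection_of_trace_sq_general {A B R : Type*} [Fintype A] [Fintype B]
    [DecidableEq A] [DecidableEq B] [Mul R] [StarMul R] {ω : R → ℂ} {a : Matrix A A ℂ → R}
    {b : Matrix B B ℂ → R} {T : Matrix (A × B) (A × B) ℂ}
    (hω : ∀ x, ω (star x) = star (ω x)) (ha : ∀ O, a Oᴴ = star (a O))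
    (hb : ∀ O, b Oᴴ = star (b O)) (hT : IsSpacetimeDensityMatrix ω a b T)
    (htrace : (T ^ 2).trace.im ≠ 0 ∨ (T ^ 2).trace.re < 0) :
    ∃ OA OB, ω (a OA * b OB) ≠ ω (b OB * a OA) := by
  by_contra! hcomm
  have hHerm : T.IsHermitian := (hT.isHermitian_iff hω ha hb).mpr hcomm
  obtain ⟨hre, him⟩ := Complex.nonneg_iff.mp (trace_sq_nonneg_of_isHermitian hHerm)
  exact htrace.elim (· him.symm) hre.not_gt

/-- If `Im Tr(T_AB²) ≠ 0` or `Re Tr(T_AB²) < 0`, then some time-separated commutator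
has a nonvanishing expectation value. -/
theorem causal_connection_of_trace_sq
    {A A' B B' : Type*} [Fintype A] [Fintype A'] [Fintype B] [Fintype B']
    [DecidableEq A] [DecidableEq A'] [DecidableEq B] [DecidableEq B']
    (ρ : Matrix (A × A') (A × A') ℂ) (hρ : ρ.PosSemidef) (hρtr : ρ.trace = 1)
    (U : Matrix (B × B') (A × A') ℂ) (hU : Uᴴ * U = 1) (hU' : U * Uᴴ = 1)
    (T : Matrix (A × B) (A × B) ℂ)
    (hT : ∀ (OA : Matrix A A ℂ) (OB : Matrix B B ℂ),
      (T * (OA ⊗ₖ OB)).trace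
        = (ρ * (OA ⊗ₖ (1 : Matrix A' A' ℂ)) * Uᴴ
            * (OB ⊗ₖ (1 : Matrix B' B' ℂ)) * U).trace) :
    ((T ^ 2).trace.im ≠ 0 ∨ (T ^ 2).trace.re < 0) →
      ∃ (OA : Matrix A A ℂ) (OB : Matrix B B ℂ),
        (ρ * (OA ⊗ₖ (1 : Matrix A' A' ℂ)) * Uᴴ
            * (OB ⊗ₖ (1 : Matrix B' B' ℂ)) * U).trace
          - (ρ * Uᴴ * (OB ⊗ₖ (1 : Matrix B' B' ℂ)) * U
            * (OA ⊗ₖ (1 : Matrix A' A' ℂ))).trace ≠ 0 := by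
  intro htrace
  simpa only [sub_ne_zero, Matrix.mul_assoc] using
    causal_connection_of_trace_sq_general (ω := fun X => (ρ * X).trace)
      (a := fun O => O ⊗ₖ (1 : Matrix A' A' ℂ))
      (b := fun O => Uᴴ * (O ⊗ₖ (1 : Matrix B' B' ℂ)) * U)
      (trace_mul_star_of_isHermitian hρ.isHermitian)
      (fun O => (conjTranspose_kronecker_one_s11 O).symm)
      (fun O => (conjTranspose_conj_kronecker_one U O).symm)
      (fun OA OB => by simpa only [Matrix.mul_assoc] using hT OA OB) htrace
end
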